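/- Let T_1 : S → S_c and T_{d-1} : S^{d-1} → (S_c)^{d-1} be the Galerkin projectors that are orthogonal with respect to A_1 and A_{d-1} respectively, and suppose that ‖(I − T_1)u‖_{M_1} ≤ c h ‖u‖_{A_1} for all u ∈ S and ‖(I − T_{d-1})u‖_{M_{d-1}} ≤ c h ‖u‖_{A_{d-1}} for all u ∈ S^{d-1}. Then there is a constant c′ (depending only on c and d, not on h or p) such that ‖(I − T_{d-1} ⊗ T_1)u‖_{A_d} ≤ c′ h ‖u‖_{A_d M_d^{-1} A_d} for all u ∈ S^d; consequently the A_d-orthogonal Galerkin projector T_d onto (S_c)^d, being the A_d-best approximation, satisfies ‖(I − T_d)u‖_{A_d} ≤ c′ h ‖u‖_{A_d M_d^{-1} A_d} and hence ‖(I − T_d)u‖_{M_d} ≤ c′ h ‖u‖_{A_d} for all u ∈ S^d. -/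

import Mathlib

noncomputable section

open MeasureTheory Set

namespace SplineMG

/-- The `j`-th piece of the uniform partition of `[0,1]` into `m` subintervals of
length `h = 1/m`; the first and last pieces are extended to `-∞` resp. `+∞`
(the spline is extended polynomially outside `[0,1]`). -/
def pieceSet (m j : ℕ) : Set ℝ :=
  (if j = 0 then Iic ((1 : ℝ) / m) else Icc ((j : ℝ) / m) (((j : ℝ) + 1) / m)) ∪
  (if j = m - 1 then Ici (((m : ℝ) - 1) / m) else ∅)

/-- `u : ℝ → ℝ` belongs to the univariate spline space `S` of degree `p` and maximal
smoothness `C^{p-1}` on the uniform partition of `(0,1)` into `m` intervals of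
length `h = 1/m`. -/
def IsSpline (m p : ℕ) (u : ℝ → ℝ) : Prop :=
  ContDiffOn ℝ (p - 1 : ℕ) u (Ioo (0 : ℝ) 1) ∧
  ∀ j < m, ∃ q : Polynomial ℝ, q.natDegree ≤ p ∧ ∀ x ∈ pieceSet m j, u x = q.eval x

/-- `u` belongs to the subspace `S₀` of `S`: all odd derivatives of order `< p`
vanish at both endpoints. -/
def IsSpline0 (m p : ℕ) (u : ℝ → ℝ) : Prop :=
  IsSpline m p u ∧
  ∀ l : ℕ, 2 * l + 1 < p →
    iteratedDeriv (2 * l + 1) u 0 = 0 ∧ iteratedDeriv (2 * l + 1) u 1 = 0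

/-- The `L²(0,1)` inner product. -/
def ip0 (u v : ℝ → ℝ) : ℝ := ∫ x in Ioo (0 : ℝ) 1, u x * v x

/-- The squared `L²(0,1)` norm `‖u‖₀²`. -/
def l2normSq (u : ℝ → ℝ) : ℝ := ∫ x in Ioo (0 : ℝ) 1, u x ^ 2

/-- The `L²(0,1)` norm `‖u‖₀`. -/
def l2norm (u : ℝ → ℝ) : ℝ := Real.sqrt (l2normSq u)

/-- The squared `H¹(0,1)` seminorm `|u|₁²`. -/
def h1semiSq (u : ℝ → ℝ) : ℝ := ∫ x in Ioo (0 : ℝ) 1, deriv u x ^ 2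

/-- The `H¹(0,1)` seminorm `|u|₁`. -/
def h1semi (u : ℝ → ℝ) : ℝ := Real.sqrt (h1semiSq u)

/-- The squared full `H¹(0,1)` norm. -/
def h1normSq (u : ℝ → ℝ) : ℝ := l2normSq u + h1semiSq u

/-- `u` belongs to `S₁`, the `L²(0,1)`-orthogonal complement of `S₀` in `S`. -/
def IsSpline1 (m p : ℕ) (u : ℝ → ℝ) : Prop :=
  IsSpline m p u ∧ ∀ v, IsSpline0 m p v → ip0 u v = 0

/-- `v = Q₀ u` is the `L²(0,1)`-orthogonal projection of `u` onto `S₀`. -/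
def IsL2Proj0 (m p : ℕ) (u v : ℝ → ℝ) : Prop :=
  IsSpline0 m p v ∧ ∀ w, IsSpline0 m p w → ip0 (u - v) w = 0

/-- The component predicate: `false ↦ S₀`, `true ↦ S₁`. -/
def IsSplineC (m p : ℕ) : Bool → (ℝ → ℝ) → Prop
  | false => IsSpline0 m p
  | true => IsSpline1 m p

/-- The tensor-product spline space `S^d = S ⊗ ⋯ ⊗ S` on `(0,1)^d`. -/
def TensorSpline (d m p : ℕ) : Submodule ℝ ((Fin d → ℝ) → ℝ) :=
  Submodule.span ℝ {u | ∃ f : Fin d → ℝ → ℝ, (∀ i, IsSpline m p (f i)) ∧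
    u = fun x => ∏ i, f i (x i)}

/-- The subspace `S_α = S_{α₁} ⊗ ⋯ ⊗ S_{α_d}` of `S^d`, for `α ∈ {0,1}^d`
(`false ↦ 0`, `true ↦ 1`). -/
def TensorSplineSub (d m p : ℕ) (α : Fin d → Bool) : Submodule ℝ ((Fin d → ℝ) → ℝ) :=
  Submodule.span ℝ {u | ∃ f : Fin d → ℝ → ℝ, (∀ i, IsSplineC m p (α i) (f i)) ∧
    u = fun x => ∏ i, f i (x i)}

/-- The open unit cube `Ω = (0,1)^d`. -/
def cube (d : ℕ) : Set (Fin d → ℝ) := Set.univ.pi fun _ => Ioo (0 : ℝ) 1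

/-- The `i`-th partial derivative. -/
def pd (d : ℕ) (i : Fin d) (u : (Fin d → ℝ) → ℝ) : (Fin d → ℝ) → ℝ :=
  fun x => deriv (fun t => u (Function.update x i t)) (x i)

/-- The `L²(Ω)` inner product on the unit cube. -/
def ipd (d : ℕ) (u v : (Fin d → ℝ) → ℝ) : ℝ := ∫ x in cube d, u x * v x

/-- The squared `L²(Ω)` norm. -/
def l2normSqD (d : ℕ) (u : (Fin d → ℝ) → ℝ) : ℝ := ∫ x in cube d, u x ^ 2

/-- The bilinear form `a(u,v) = ∫_Ω (∇u·∇v + uv) dx`. -/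
def aForm (d : ℕ) (u v : (Fin d → ℝ) → ℝ) : ℝ :=
  ∫ x in cube d, (∑ i, pd d i u x * pd d i v x) + u x * v x

/-- The squared `H¹(Ω)` seminorm. -/
def h1semiSqD (d : ℕ) (u : (Fin d → ℝ) → ℝ) : ℝ :=
  ∫ x in cube d, ∑ i, pd d i u x ^ 2

/-- The squared full `H¹(Ω)` norm. -/
def h1normSqD (d : ℕ) (u : (Fin d → ℝ) → ℝ) : ℝ := l2normSqD d u + h1semiSqD d u

/-- `v = Q_α u` is the `L²(Ω)`-orthogonal projection of `u` onto `S_α`. -/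
def IsL2ProjSub (d m p : ℕ) (α : Fin d → Bool) (u v : (Fin d → ℝ) → ℝ) : Prop :=
  v ∈ TensorSplineSub d m p α ∧ ∀ w ∈ TensorSplineSub d m p α, ipd d (u - v) w = 0

/-- The coarse tensor-product spline space `(S_c)^d` (with `m/2` knot spans of
width `2h` per direction). -/
def TensorSplineCoarse (d m p : ℕ) : Submodule ℝ ((Fin d → ℝ) → ℝ) :=
  TensorSpline d (m / 2) p

/-- `v = T_c u` is the `a(·,·)`-orthogonal (Galerkin) projection of `u` onto `(S_c)^d`. -/
def IsGalerkinCoarseProj (d m p : ℕ) (u v : (Fin d → ℝ) → ℝ) : Prop :=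
  v ∈ TensorSplineCoarse d m p ∧ ∀ w ∈ TensorSplineCoarse d m p, aForm d (u - v) w = 0

end SplineMG

namespace SplineMG

/-- The bilinear form of the tensor-product operator `A_{d−1} ⊗ A_1` on `S^d`
(`d = e + 2`, with `A_1` acting in the last coordinate):
`⟨(A_{d−1}⊗A_1)u, v⟩ = ∫ Σ_{j<d−1} (∂_j∂_d u·∂_j∂_d v + ∂_j u·∂_j v)
  + ∂_d u·∂_d v + u·v`.
The projector `T_{d−1} ⊗ T_1` is the projector onto `(S_c)^d` that is orthogonal
with respect to this form. -/
def mixedForm (e : ℕ) (u v : (Fin (e + 2) → ℝ) → ℝ) : ℝ :=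
  ∫ x in cube (e + 2),
    (∑ j : Fin (e + 2),
      if j = Fin.last (e + 1) then 0
      else
        pd (e + 2) j (pd (e + 2) (Fin.last (e + 1)) u) x *
            pd (e + 2) j (pd (e + 2) (Fin.last (e + 1)) v) x +
          pd (e + 2) j u x * pd (e + 2) j v x) +
      pd (e + 2) (Fin.last (e + 1)) u x * pd (e + 2) (Fin.last (e + 1)) v x +
      u x * v x

/-!
In a basis of `S` that is orthonormal for the mass form and orthogonal for the stiffness form, all
the forms involved become diagonal: if `λ` and `λ'` are the eigenvalues of `A_{d-1}` and `A_1`, then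
`M_d`, `A_d` and `A_{d-1} ⊗ A_1` have eigenvalues `1`, `λ + λ' - 1` and `λ λ'`, and
`T_{d-1} ⊗ T_1` is a Kronecker product of matrices.

Duality turns the hypothesis on `T_{d-1}` into `‖(I - T_{d-1}) u‖_A ≤ c h ‖u‖_{A M⁻¹ A}` with
`A = A_{d-1}`, `M = M_{d-1}`, and similarly for `T_1`. Hence the decomposition
`I - T_{d-1} ⊗ T_1 = (I - T_{d-1}) ⊗ I + T_{d-1} ⊗ (I - T_1)`, whose two summands are orthogonal for
`A_{d-1} ⊗ M_1`, bounds the `A_{d-1} ⊗ M_1`-norm of the error by the forms with eigenvalues `λ²` and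
`λ λ'`. Adding the bound obtained by exchanging the factors gives the form with eigenvalues
`(λ + λ')² ≤ 4 (λ + λ' - 1)²`, so `c' = 2 c` works. Best approximation transfers the estimate to
`T_d`, and Aubin–Nitsche duality turns it into the estimate in the mass norm.
-/

open LinearMap (BilinForm)
open LinearMap.BilinForm
open scoped Matrix Kronecker

section Galerkin

variable {V : Type*} [AddCommGroup V] [Module ℝ V] {A M : BilinForm ℝ V} {C : Submodule ℝ V}
  {c : ℝ} {u v w z : V}

/-- `v` is the `A`-orthogonal (Galerkin) projection of `u` onto the subspace `C`. -/
def IsOrthProj (A : BilinForm ℝ V) (C : Submodule ℝ V) (u v : V) : Prop :=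
  v ∈ C ∧ ∀ z ∈ C, A (u - v) z = 0

/-- The approximation property `‖u - v‖²_M ≤ c ‖u‖²_A` of the `A`-orthogonal projection `v` of
`u` onto `C`. -/
def GalerkinBound (M A : BilinForm ℝ V) (C : Submodule ℝ V) (c : ℝ) : Prop :=
  ∀ u v, IsOrthProj A C u v → M (u - v) (u - v) ≤ c * A u u

lemma apply_sq_le_of_isPosSemidef (hA : A.IsPosSemidef) (u v : V) :
    A u v ^ 2 ≤ A u u * A v v :=
  A.apply_sq_le_of_symm hA.nonneg (isSymm_iff.1 hA.isSymm) u v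

lemma eq_zero_of_apply_self_eq_zero (hA : A.IsPosSemidef) (hA' : A.Nondegenerate)
    (hu : A u u = 0) : u = 0 :=
  (A.nondegenerate_iff hA.nonneg (isSymm_iff.1 hA.isSymm)).1 hA' u |>.1 hu

namespace IsOrthProj

lemma sub {u' v' : V} (h : IsOrthProj A C u v) (h' : IsOrthProj A C u' v') :
    IsOrthProj A C (u - u') (v - v') := by
  refine ⟨C.sub_mem h.1 h'.1, fun z hz => ?_⟩
  rw [sub_sub_sub_comm, map_sub, LinearMap.sub_apply, h.2 z hz, h'.2 z hz, sub_zero]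

lemma sub_zero (h : IsOrthProj A C u v) : IsOrthProj A C (u - v) 0 :=
  ⟨C.zero_mem, by simpa using h.2⟩

lemma apply_sub_eq (hA : A.IsSymm) (h : IsOrthProj A C u v) (hz : z ∈ C) :
    A (u - z) (u - z) = A (u - v) (u - v) + A (v - z) (v - z) := by
  have horth : A (u - v) (v - z) = 0 := h.2 _ (C.sub_mem h.1 hz)
  have horth' : A (v - z) (u - v) = 0 := by rw [hA.eq, horth]
  rw [← sub_add_sub_cancel u v z, map_add, map_add, LinearMap.add_apply, LinearMap.add_apply,
    horth, horth', add_zero, zero_add]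

lemma apply_sub_le (hA : A.IsPosSemidef) (h : IsOrthProj A C u v) (hz : z ∈ C) :
    A (u - v) (u - v) ≤ A (u - z) (u - z) := by
  rw [h.apply_sub_eq hA.isSymm hz]
  exact le_add_of_nonneg_right (hA.nonneg _)

lemma apply_proj_le (hA : A.IsPosSemidef) (h : IsOrthProj A C u v) : A v v ≤ A u u := by
  have hpyth := h.apply_sub_eq hA.isSymm C.zero_mem
  have hnonneg := hA.nonneg (u - v)
  simp only [_root_.sub_zero] at hpyth
  linarith

lemma apply_sub_proj_le {r s : V} (hA : A.IsPosSemidef) (h : IsOrthProj A C u v)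
    (h' : IsOrthProj A C r s) :
    A (u - s) (u - s) ≤ A (u - v) (u - v) + A (u - r) (u - r) := by
  rw [h.apply_sub_eq hA.isSymm h'.1]
  gcongr
  exact (h.sub h').apply_proj_le hA

lemma eq (hA : A.IsPosSemidef) (hA' : A.Nondegenerate) {v' : V} (h : IsOrthProj A C u v)
    (h' : IsOrthProj A C u v') : v = v' := by
  have hzero : A (v - v') (v - v') = 0 :=
    le_antisymm (by simpa using (h.sub h').apply_proj_le hA) (hA.nonneg _)
  exact sub_eq_zero.1 (eq_zero_of_apply_self_eq_zero hA hA' hzero)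

end IsOrthProj

lemma exists_linearMap_isOrthProj [FiniteDimensional ℝ V] (hA : A.IsPosSemidef)
    (hA' : A.Nondegenerate) (C : Submodule ℝ V) :
    ∃ T : V →ₗ[ℝ] V, ∀ u, IsOrthProj A C u (T u) := by
  have hdisj : Disjoint C (A.orthogonal C) := Submodule.disjoint_def.2 fun x hx hx' =>
    eq_zero_of_apply_self_eq_zero hA hA' (hx' x hx)
  have hcompl : IsCompl C (A.orthogonal C) :=
    (isCompl_orthogonal_iff_disjoint hA.isSymm.isRefl).2 hdisj
  refine ⟨C.projection _ hcompl, fun u => ⟨C.projection_apply_mem hcompl u, fun z hz => ?_⟩⟩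
  rw [hA.isSymm.eq]
  exact Submodule.sub_projection_mem hcompl u z hz

lemma GalerkinBound.apply_sub_le_of_riesz (hA : A.IsPosSemidef) (hM : M.IsPosSemidef)
    (hc : 0 ≤ c) (hbound : GalerkinBound M A C c) (hw : ∀ z, M w z = A u z)
    (h : IsOrthProj A C u v) :
    A (u - v) (u - v) ≤ c * M w w := by
  set e := u - v
  have henergy : A e e = M w e := by
    have : A v e = 0 := by rw [hA.isSymm.eq, h.2 v h.1]
    rw [hw, ← sub_zero (A u e), ← this, ← LinearMap.sub_apply, ← map_sub]
  have herror : M e e ≤ c * A e e := by simpa using hbound e 0 h.sub_zero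
  have hcauchy : A e e ^ 2 ≤ M w w * M e e :=
    henergy ▸ apply_sq_le_of_isPosSemidef hM w e
  rcases (hA.nonneg e).eq_or_lt with hzero | hpos
  · rw [← hzero]
    exact mul_nonneg hc (hM.nonneg w)
  · nlinarith [mul_le_mul_of_nonneg_left herror (hM.nonneg w)]

lemma galerkinBound_of_riesz [FiniteDimensional ℝ V] (hA : A.IsPosSemidef)
    (hA' : A.Nondegenerate) (hM : M.IsPosSemidef) (hc : 0 ≤ c)
    (hbound : ∀ u v w, (∀ z, M w z = A u z) → IsOrthProj A C u v →
      A (u - v) (u - v) ≤ c * M w w) :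
    GalerkinBound M A C c := by
  obtain ⟨T, hT⟩ := exists_linearMap_isOrthProj hA hA' C
  intro u v huv
  set e := u - v with he
  set y := symmCompOfNondegenerate M A hA' e
  have hriesz : ∀ z, M e z = A y z := fun z => (symmCompOfNondegenerate_left_apply M hA' z e).symm
  have hdual : M e e = A (y - T y) u := by
    have hTy : A (T y) e = 0 := by rw [hA.isSymm.eq, huv.2 _ (hT y).1]
    rw [hriesz, ← sub_zero (A y e), ← hTy, ← LinearMap.sub_apply, ← map_sub, he, map_sub,
      (hT y).2 v huv.1, sub_zero]
  have hcauchy : M e e ^ 2 ≤ A (y - T y) (y - T y) * A u u :=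
    hdual ▸ apply_sq_le_of_isPosSemidef hA _ _
  have hdualError := mul_le_mul_of_nonneg_right (hbound y (T y) e hriesz (hT y)) (hA.nonneg u)
  rcases (hM.nonneg e).eq_or_lt with hzero | hpos
  · rw [← hzero]
    exact mul_nonneg hc (hA.nonneg u)
  · nlinarith

lemma exists_basis_simultaneous_diagonal [FiniteDimensional ℝ V] (hM : M.IsPosSemidef)
    (hM' : M.Nondegenerate) (hA : A.IsSymm) :
    ∃ (n : ℕ) (b : Module.Basis (Fin n) ℝ V) (μ : Fin n → ℝ),
      (∀ k l, M (b k) (b l) = if k = l then 1 else 0) ∧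
      (∀ k l, A (b k) (b l) = if k = l then μ k else 0) := by
  let core : InnerProductSpace.Core ℝ V :=
    { inner := fun u v => M u v
      conj_inner_symm := fun u v => hM.isSymm.eq v u
      re_inner_nonneg := hM.nonneg
      add_left := fun u v w => by simp
      smul_left := fun u v r => by simp
      definite := fun _ => eq_zero_of_apply_self_eq_zero hM hM' }
  let _ : NormedAddCommGroup V := core.toNormedAddCommGroup
  let _ : InnerProductSpace ℝ V := InnerProductSpace.ofCore core.toCore
  let T := symmCompOfNondegenerate A M hM'
  have hT : ∀ u v, inner ℝ (T u) v = A u v := fun u v =>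
    symmCompOfNondegenerate_left_apply A hM' v u
  have hTsymm : T.IsSymmetric := fun u v => by rw [hT, real_inner_comm, hT, hA.eq]
  let b := hTsymm.eigenvectorBasis rfl
  have horth : ∀ k l, inner ℝ (b k) (b l) = if k = l then (1 : ℝ) else 0 :=
    orthonormal_iff_ite.1 b.orthonormal
  refine ⟨_, b.toBasis, hTsymm.eigenvalues rfl, ?_, ?_⟩ <;> intro k l <;>
    rw [OrthonormalBasis.coe_toBasis]
  · exact horth k l
  · rw [← hT, hTsymm.apply_eigenvectorBasis rfl k, real_inner_smul_left, horth]
    simp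

end Galerkin

section TensorProjection

variable {ι κ : Type*}

/-- The tensor product `(f ⊗ g) (x, y) = f x * g y` of two functions, as a bilinear map. It is
used both for functions of real variables and for coefficient vectors. -/
def outer : (ι → ℝ) →ₗ[ℝ] (κ → ℝ) →ₗ[ℝ] (ι × κ → ℝ) :=
  LinearMap.mk₂ ℝ (fun f g x => f x.1 * g x.2)
    (fun _ _ _ => by ext; simp [add_mul]) (fun _ _ _ => by ext; simp [mul_assoc])
    (fun _ _ _ => by ext; simp [mul_add]) (fun _ _ _ => by ext; simp [mul_left_comm])

lemma outer_apply (f : ι → ℝ) (g : κ → ℝ) (x : ι × κ) : outer f g x = f x.1 * g x.2 := rfl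

/-- The eigenvalues `w i + w' k - 1` of `A_{d₁} ⊗ M + M ⊗ A_{d₂} - M ⊗ M`, where `w` and `w'`
are those of `A_{d₁}` and `A_{d₂}`. -/
def sumWeight (w : ι → ℝ) (w' : κ → ℝ) : ι × κ → ℝ := fun x => w x.1 + w' x.2 - 1

lemma one_le_sumWeight {w : ι → ℝ} {w' : κ → ℝ} (hw : ∀ i, 1 ≤ w i) (hw' : ∀ k, 1 ≤ w' k)
    (x : ι × κ) : 1 ≤ sumWeight w w' x := by
  rw [sumWeight]
  linarith [hw x.1, hw' x.2]

variable [Fintype ι] [Fintype κ]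

/-- The diagonal bilinear form `∑ i, w i * (u i * v i)` on coordinate space. -/
def weightedForm (w : ι → ℝ) : BilinForm ℝ (ι → ℝ) :=
  ∑ i, w i • (LinearMap.mul ℝ ℝ).compl₁₂ (LinearMap.proj i) (LinearMap.proj i)

lemma weightedForm_apply (w u v : ι → ℝ) : weightedForm w u v = ∑ i, w i * (u i * v i) := by
  simp [weightedForm, LinearMap.sum_apply]

lemma weightedForm_isPosSemidef {w : ι → ℝ} (hw : ∀ i, 0 ≤ w i) :
    (weightedForm w).IsPosSemidef where
  eq u v := by simp only [weightedForm_apply, mul_comm (u _)]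
  nonneg u := by
    rw [weightedForm_apply]
    exact Finset.sum_nonneg fun i _ => mul_nonneg (hw i) (mul_self_nonneg _)

lemma weightedForm_nondegenerate {w : ι → ℝ} (hw : ∀ i, 0 < w i) :
    (weightedForm w).Nondegenerate := by
  have hpos := weightedForm_isPosSemidef fun i => (hw i).le
  refine (nondegenerate_iff _ hpos.nonneg (isSymm_iff.1 hpos.isSymm)).2 fun u =>
    ⟨fun hu => funext fun i => ?_, by rintro rfl; simp⟩
  rw [weightedForm_apply, Finset.sum_eq_zero_iff_of_nonneg
    fun i _ => mul_nonneg (hw i).le (mul_self_nonneg _)] at hu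
  simpa [(hw i).ne'] using hu i (Finset.mem_univ i)

lemma weightedForm_riesz (w u v : ι → ℝ) : weightedForm 1 (w * u) v = weightedForm w u v := by
  simp [weightedForm_apply, mul_assoc]

lemma eq_mul_of_weightedForm_riesz {w u v : ι → ℝ}
    (h : ∀ z, weightedForm 1 v z = weightedForm w u z) : v = w * u := by
  have hnondeg := weightedForm_nondegenerate (w := (1 : ι → ℝ)) fun _ => one_pos
  refine sub_eq_zero.1 (hnondeg.1 _ fun z => ?_)
  rw [map_sub, LinearMap.sub_apply, h, weightedForm_riesz, sub_self]

lemma weightedForm_outer_eq_sum_columns (w : ι → ℝ) (w' : κ → ℝ) (U V : ι × κ → ℝ) :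
    weightedForm (outer w w') U V =
      ∑ k, w' k * weightedForm w (fun i => U (i, k)) (fun i => V (i, k)) := by
  simp only [weightedForm_apply, Fintype.sum_prod_type_right, Finset.mul_sum, outer_apply,
    mul_assoc, mul_left_comm (w' _)]

lemma weightedForm_outer_eq_sum_rows (w : ι → ℝ) (w' : κ → ℝ) (U V : ι × κ → ℝ) :
    weightedForm (outer w w') U V =
      ∑ i, w i * weightedForm w' (fun k => U (i, k)) (fun k => V (i, k)) := by
  simp only [weightedForm_apply, Fintype.sum_prod_type, Finset.mul_sum, outer_apply, mul_assoc]

lemma weightedForm_swap (w U V : ι × κ → ℝ) :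
    weightedForm (w ∘ Prod.swap) (U ∘ Prod.swap) (V ∘ Prod.swap) = weightedForm w U V := by
  simp only [weightedForm_apply, Function.comp_apply]
  exact (Equiv.prodComm κ ι).sum_comp fun x => w x * (U x * V x)

lemma kronecker_mulVec_apply (T : Matrix ι ι ℝ) (T' : Matrix κ κ ℝ) (U : ι × κ → ℝ) (i : ι)
    (k : κ) : ((T ⊗ₖ T') *ᵥ U) (i, k) = (T *ᵥ fun j => (T' *ᵥ fun l => U (j, l)) k) i := by
  simp only [Matrix.mulVec, dotProduct, Fintype.sum_prod_type, Matrix.kroneckerMap_apply,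
    Finset.mul_sum, mul_assoc]

lemma kronecker_mulVec_swap (T : Matrix ι ι ℝ) (T' : Matrix κ κ ℝ) (U : ι × κ → ℝ) :
    ((T ⊗ₖ T') *ᵥ U) ∘ Prod.swap = (T' ⊗ₖ T) *ᵥ (U ∘ Prod.swap) := by
  ext ⟨k, i⟩
  simp only [Matrix.mulVec, dotProduct, Fintype.sum_prod_type, Matrix.kroneckerMap_apply,
    Function.comp_apply, Prod.swap]
  rw [Finset.sum_comm]
  simp only [mul_comm (T' _ _)]

variable {C : Submodule ℝ (ι → ℝ)} {C' : Submodule ℝ (κ → ℝ)} {T : Matrix ι ι ℝ}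
  {T' : Matrix κ κ ℝ} {w : ι → ℝ} {w' : κ → ℝ} {c : ℝ} {U V W : ι × κ → ℝ}

lemma kronecker_mulVec_mem_map₂_outer (hT : ∀ u, T *ᵥ u ∈ C) (hT' : ∀ u, T' *ᵥ u ∈ C')
    (U : ι × κ → ℝ) : (T ⊗ₖ T') *ᵥ U ∈ Submodule.map₂ outer C C' := by
  classical
  rw [Matrix.mulVec_eq_sum]
  refine Submodule.sum_mem _ fun x _ => ?_
  have hcol : (T ⊗ₖ T')ᵀ x = outer (T *ᵥ Pi.single x.1 1) (T' *ᵥ Pi.single x.2 1) := by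
    ext y
    simp [outer_apply]
  rw [hcol, op_smul_eq_smul]
  exact Submodule.smul_mem _ _ (Submodule.apply_mem_map₂ _ (hT _) (hT' _))

lemma isOrthProj_kronecker_mulVec (hT : ∀ u, IsOrthProj (weightedForm w) C u (T *ᵥ u))
    (hT' : ∀ u, IsOrthProj (weightedForm w') C' u (T' *ᵥ u)) (U : ι × κ → ℝ) :
    IsOrthProj (weightedForm (outer w w')) (Submodule.map₂ outer C C') U ((T ⊗ₖ T') *ᵥ U) := by
  refine ⟨kronecker_mulVec_mem_map₂_outer (fun u => (hT u).1) (fun u => (hT' u).1) U, ?_⟩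
  suffices Submodule.map₂ outer C C' ≤
      LinearMap.ker (weightedForm (outer w w') (U - (T ⊗ₖ T') *ᵥ U)) from fun z hz => this hz
  refine Submodule.map₂_le.2 fun a ha b hb => ?_
  set R : ι × κ → ℝ := fun x => (T' *ᵥ fun l => U (x.1, l)) x.2
  have hrows : weightedForm (outer w w') (U - R) (outer a b) = 0 := by
    rw [weightedForm_outer_eq_sum_rows]
    exact Finset.sum_eq_zero fun i _ =>
      mul_eq_zero_of_right _ ((hT' fun l => U (i, l)).2 _ (C'.smul_mem (a i) hb))
  have hcolumns : weightedForm (outer w w') (R - (T ⊗ₖ T') *ᵥ U) (outer a b) = 0 := by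
    rw [weightedForm_outer_eq_sum_columns]
    refine Finset.sum_eq_zero fun k _ => mul_eq_zero_of_right _ ?_
    have hproj := (hT fun j => R (j, k)).2 _ (C.smul_mem (b k) ha)
    convert hproj using 2
    · congr 1
      ext i
      simp only [Pi.sub_apply, kronecker_mulVec_apply, R]
    · ext i
      simp [outer_apply, mul_comm]
  rw [LinearMap.mem_ker, ← sub_add_sub_cancel U R, map_add, LinearMap.add_apply, hrows, hcolumns,
    add_zero]

lemma weightedForm_sub_proj_le {u v r s : ι → ℝ} (hw : ∀ i, 0 ≤ w i) (hc : 0 ≤ c)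
    (hC : GalerkinBound (weightedForm 1) (weightedForm w) C c)
    (hv : IsOrthProj (weightedForm w) C u v) (hs : IsOrthProj (weightedForm w) C r s) :
    weightedForm w (u - s) (u - s) ≤
      c * weightedForm (w * w) u u + weightedForm w (u - r) (u - r) := by
  have hpos := weightedForm_isPosSemidef hw
  have hpos_one := weightedForm_isPosSemidef (w := (1 : ι → ℝ)) fun _ => zero_le_one
  have hriesz : weightedForm 1 (w * u) (w * u) = weightedForm (w * w) u u := by
    simp only [weightedForm_apply, Pi.mul_apply, Pi.one_apply]
    exact Finset.sum_congr rfl fun i _ => by ring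
  rw [← hriesz]
  exact (hv.apply_sub_proj_le hpos hs).trans <| add_le_add_left
    (hC.apply_sub_le_of_riesz hpos hpos_one hc (weightedForm_riesz w u) hv) _

lemma weightedForm_outer_one_sub_kronecker_mulVec_le (hw : ∀ i, 0 ≤ w i) (hc : 0 ≤ c)
    (hT : ∀ u, IsOrthProj (weightedForm w) C u (T *ᵥ u))
    (hT' : ∀ u, IsOrthProj (weightedForm w') C' u (T' *ᵥ u))
    (hC : GalerkinBound (weightedForm 1) (weightedForm w) C c)
    (hC' : GalerkinBound (weightedForm 1) (weightedForm w') C' c) (U : ι × κ → ℝ) :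
    weightedForm (outer w 1) (U - (T ⊗ₖ T') *ᵥ U) (U - (T ⊗ₖ T') *ᵥ U) ≤
      c * (weightedForm (outer (w * w) 1) U U + weightedForm (outer w w') U U) := by
  set R : ι × κ → ℝ := fun x => (T' *ᵥ fun l => U (x.1, l)) x.2
  have hcolumn : ∀ k, weightedForm w (fun i => (U - (T ⊗ₖ T') *ᵥ U) (i, k))
      (fun i => (U - (T ⊗ₖ T') *ᵥ U) (i, k)) ≤
        c * weightedForm (w * w) (fun i => U (i, k)) (fun i => U (i, k)) +
          weightedForm w (fun i => (U - R) (i, k)) (fun i => (U - R) (i, k)) := fun k => by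
    simp only [Pi.sub_apply, kronecker_mulVec_apply]
    exact weightedForm_sub_proj_le hw hc hC (hT _) (hT _)
  have hrow : weightedForm (outer w 1) (U - R) (U - R) ≤ c * weightedForm (outer w w') U U := by
    rw [weightedForm_outer_eq_sum_rows, weightedForm_outer_eq_sum_rows w, Finset.mul_sum]
    refine Finset.sum_le_sum fun i _ => ?_
    rw [mul_left_comm]
    exact mul_le_mul_of_nonneg_left (hC' _ _ (hT' fun k => U (i, k))) (hw i)
  calc weightedForm (outer w 1) (U - (T ⊗ₖ T') *ᵥ U) (U - (T ⊗ₖ T') *ᵥ U)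
    _ ≤ ∑ k, (c * weightedForm (w * w) (fun i => U (i, k)) (fun i => U (i, k)) +
        weightedForm w (fun i => (U - R) (i, k)) (fun i => (U - R) (i, k))) := by
      simp only [weightedForm_outer_eq_sum_columns, Pi.one_apply, one_mul]
      exact Finset.sum_le_sum fun k _ => hcolumn k
    _ = c * weightedForm (outer (w * w) 1) U U + weightedForm (outer w 1) (U - R) (U - R) := by
      simp only [weightedForm_outer_eq_sum_columns, Finset.sum_add_distrib, Finset.mul_sum,
        Pi.one_apply, one_mul]
    _ ≤ c * (weightedForm (outer (w * w) 1) U U + weightedForm (outer w w') U U) := by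
      rw [mul_add]
      gcongr

lemma weightedForm_one_outer_sub_kronecker_mulVec_le (hw' : ∀ k, 0 ≤ w' k) (hc : 0 ≤ c)
    (hT : ∀ u, IsOrthProj (weightedForm w) C u (T *ᵥ u))
    (hT' : ∀ u, IsOrthProj (weightedForm w') C' u (T' *ᵥ u))
    (hC : GalerkinBound (weightedForm 1) (weightedForm w) C c)
    (hC' : GalerkinBound (weightedForm 1) (weightedForm w') C' c) (U : ι × κ → ℝ) :
    weightedForm (outer 1 w') (U - (T ⊗ₖ T') *ᵥ U) (U - (T ⊗ₖ T') *ᵥ U) ≤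
      c * (weightedForm (outer 1 (w' * w')) U U + weightedForm (outer w w') U U) := by
  have outer_swap : ∀ (f : ι → ℝ) (g : κ → ℝ), outer g f = outer f g ∘ Prod.swap :=
    fun f g => funext fun x => mul_comm _ _
  have h := weightedForm_outer_one_sub_kronecker_mulVec_le hw' hc hT' hT hC' hC (U ∘ Prod.swap)
  rw [← kronecker_mulVec_swap, ← Pi.sub_comp] at h
  simpa only [outer_swap 1, outer_swap w, weightedForm_swap] using h

lemma weightedForm_sumWeight_sub_kronecker_mulVec_le (hw : ∀ i, 1 ≤ w i) (hw' : ∀ k, 1 ≤ w' k)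
    (hc : 0 ≤ c) (hT : ∀ u, IsOrthProj (weightedForm w) C u (T *ᵥ u))
    (hT' : ∀ u, IsOrthProj (weightedForm w') C' u (T' *ᵥ u))
    (hC : GalerkinBound (weightedForm 1) (weightedForm w) C c)
    (hC' : GalerkinBound (weightedForm 1) (weightedForm w') C' c) (U : ι × κ → ℝ) :
    weightedForm (sumWeight w w') (U - (T ⊗ₖ T') *ᵥ U) (U - (T ⊗ₖ T') *ᵥ U) ≤
      4 * c * weightedForm 1 (sumWeight w w' * U) (sumWeight w w' * U) := by
  set X := U - (T ⊗ₖ T') *ᵥ U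
  calc weightedForm (sumWeight w w') X X
    _ ≤ weightedForm (outer w 1) X X + weightedForm (outer 1 w') X X := by
      simp only [weightedForm_apply, ← Finset.sum_add_distrib, ← add_mul]
      refine Finset.sum_le_sum fun x _ => mul_le_mul_of_nonneg_right ?_ (mul_self_nonneg _)
      simp [sumWeight, outer_apply]
    _ ≤ c * (weightedForm (outer (w * w) 1) U U + weightedForm (outer w w') U U) +
        c * (weightedForm (outer 1 (w' * w')) U U + weightedForm (outer w w') U U) :=
      add_le_add
        (weightedForm_outer_one_sub_kronecker_mulVec_le (fun i => zero_le_one.trans (hw i)) hc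
          hT hT' hC hC' U)
        (weightedForm_one_outer_sub_kronecker_mulVec_le (fun k => zero_le_one.trans (hw' k)) hc
          hT hT' hC hC' U)
    _ = c * ∑ x, (w x.1 + w' x.2) ^ 2 * U x ^ 2 := by
      simp only [weightedForm_apply, ← mul_add, ← Finset.sum_add_distrib, outer_apply,
        Pi.mul_apply, Pi.one_apply]
      exact congrArg _ (Finset.sum_congr rfl fun x _ => by ring)
    _ ≤ c * ∑ x, (2 * sumWeight w w' x) ^ 2 * U x ^ 2 := by
      gcongr with x
      · linarith [hw x.1, hw' x.2]
      · rw [sumWeight]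
        linarith [hw x.1, hw' x.2]
    _ = 4 * c * weightedForm 1 (sumWeight w w' * U) (sumWeight w w' * U) := by
      simp only [weightedForm_apply, Pi.mul_apply, Pi.one_apply, Finset.mul_sum]
      exact Finset.sum_congr rfl fun x _ => by ring

lemma exists_matrix_isOrthProj_weightedForm (hw : ∀ i, 0 < w i)
    (C : Submodule ℝ (ι → ℝ)) :
    ∃ T : Matrix ι ι ℝ, ∀ u, IsOrthProj (weightedForm w) C u (T *ᵥ u) := by
  classical
  obtain ⟨T, hT⟩ := exists_linearMap_isOrthProj
    (weightedForm_isPosSemidef fun i => (hw i).le) (weightedForm_nondegenerate hw) C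
  exact ⟨T.toMatrix', by simpa using hT⟩

theorem weightedForm_sub_isOrthProj_outer_le (hw : ∀ i, 1 ≤ w i) (hw' : ∀ k, 1 ≤ w' k)
    (hc : 0 ≤ c) (hC : GalerkinBound (weightedForm 1) (weightedForm w) C c)
    (hC' : GalerkinBound (weightedForm 1) (weightedForm w') C' c)
    (hV : IsOrthProj (weightedForm (outer w w')) (Submodule.map₂ outer C C') U V)
    (hW : ∀ Z, weightedForm 1 W Z = weightedForm (sumWeight w w') U Z) :
    weightedForm (sumWeight w w') (U - V) (U - V) ≤ 4 * c * weightedForm 1 W W := by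
  have hpos : ∀ i, 0 < w i := fun i => one_pos.trans_le (hw i)
  have hpos' : ∀ k, 0 < w' k := fun k => one_pos.trans_le (hw' k)
  have hposProd : ∀ x, 0 < outer w w' x := fun x => mul_pos (hpos x.1) (hpos' x.2)
  obtain ⟨T, hT⟩ := exists_matrix_isOrthProj_weightedForm hpos C
  obtain ⟨T', hT'⟩ := exists_matrix_isOrthProj_weightedForm hpos' C'
  obtain rfl : V = (T ⊗ₖ T') *ᵥ U :=
    hV.eq (weightedForm_isPosSemidef fun x => (hposProd x).le)
      (weightedForm_nondegenerate hposProd) (isOrthProj_kronecker_mulVec hT hT' U)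
  obtain rfl := eq_mul_of_weightedForm_riesz hW
  exact weightedForm_sumWeight_sub_kronecker_mulVec_le hw hw' hc hT hT' hC hC' U

theorem weightedForm_sub_isOrthProj_sumWeight_le (hw : ∀ i, 1 ≤ w i) (hw' : ∀ k, 1 ≤ w' k)
    (hc : 0 ≤ c) (hC : GalerkinBound (weightedForm 1) (weightedForm w) C c)
    (hC' : GalerkinBound (weightedForm 1) (weightedForm w') C' c)
    (hV : IsOrthProj (weightedForm (sumWeight w w')) (Submodule.map₂ outer C C') U V)
    (hW : ∀ Z, weightedForm 1 W Z = weightedForm (sumWeight w w') U Z) :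
    weightedForm (sumWeight w w') (U - V) (U - V) ≤ 4 * c * weightedForm 1 W W := by
  have hposProd : ∀ x, 0 < outer w w' x := fun x =>
    mul_pos (one_pos.trans_le (hw x.1)) (one_pos.trans_le (hw' x.2))
  obtain ⟨P, hP⟩ := exists_linearMap_isOrthProj
    (weightedForm_isPosSemidef fun x => (hposProd x).le) (weightedForm_nondegenerate hposProd)
    (Submodule.map₂ outer C C')
  calc weightedForm (sumWeight w w') (U - V) (U - V)
    _ ≤ weightedForm (sumWeight w w') (U - P U) (U - P U) :=
      hV.apply_sub_le (weightedForm_isPosSemidef fun x =>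
        zero_le_one.trans (one_le_sumWeight hw hw' x)) (hP U).1
    _ ≤ 4 * c * weightedForm 1 W W :=
      weightedForm_sub_isOrthProj_outer_le hw hw' hc hC hC' (hP U) hW

theorem galerkinBound_sumWeight (hw : ∀ i, 1 ≤ w i) (hw' : ∀ k, 1 ≤ w' k)
    (hc : 0 ≤ c) (hC : GalerkinBound (weightedForm 1) (weightedForm w) C c)
    (hC' : GalerkinBound (weightedForm 1) (weightedForm w') C' c) :
    GalerkinBound (weightedForm 1) (weightedForm (sumWeight w w')) (Submodule.map₂ outer C C')
      (4 * c) :=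
  have hpos : ∀ x, 0 < sumWeight w w' x := fun x => one_pos.trans_le (one_le_sumWeight hw hw' x)
  galerkinBound_of_riesz (weightedForm_isPosSemidef fun x => (hpos x).le)
    (weightedForm_nondegenerate hpos) (weightedForm_isPosSemidef fun _ => zero_le_one)
    (by positivity) fun _ _ _ hW hV =>
      weightedForm_sub_isOrthProj_sumWeight_le hw hw' hc hC hC' hV hW

end TensorProjection

section Splines

variable {m p : ℕ} {u : ℝ → ℝ}

lemma Icc_subset_pieceSet (m j : ℕ) :
    Icc ((j : ℝ) / m) (((j : ℝ) + 1) / m) ⊆ pieceSet m j := by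
  intro x hx
  left
  split_ifs with hj
  · simpa [hj] using hx.2
  · exact hx

lemma pieceSet_mul_subset {r k : ℕ} (hr : 0 < r) (hk : 0 < k) (j : ℕ) :
    pieceSet (r * k) j ⊆ pieceSet k (j / r) := by
  have hr' : (1 : ℝ) ≤ r := by exact_mod_cast hr
  have hk' : (0 : ℝ) < k := by exact_mod_cast hk
  have hlower : (r : ℝ) * (j / r : ℕ) ≤ j := by exact_mod_cast Nat.mul_div_le j r
  have hupper : (j : ℝ) + 1 ≤ r * (j / r : ℕ) + r := by
    exact_mod_cast Nat.lt_mul_div_succ j hr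
  rintro x (hx | hx) <;> split_ifs at hx with hj
  · subst hj
    refine Or.inl ?_
    simp only [Nat.zero_div, if_true, mem_Iic] at hx ⊢
    push_cast at hx
    exact hx.trans (by gcongr; nlinarith)
  · refine Icc_subset_pieceSet k _ ⟨?_, ?_⟩
    · refine le_trans ?_ hx.1
      rw [div_le_div_iff₀ hk' (by positivity)]
      push_cast
      nlinarith
    · refine hx.2.trans ?_
      rw [div_le_div_iff₀ (by positivity) hk']
      push_cast
      nlinarith
  · obtain ⟨k, rfl⟩ := Nat.exists_eq_add_one_of_ne_zero hk.ne'
    have hlast : j / r = k := by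
      rw [hj, Nat.mul_succ, Nat.add_sub_assoc hr, Nat.mul_add_div hr, Nat.div_eq_of_lt (by omega),
        add_zero]
    refine Or.inr ?_
    rw [Nat.add_sub_cancel, if_pos hlast, mem_Ici]
    refine le_trans ?_ hx
    rw [div_le_div_iff₀ hk' (by positivity)]
    push_cast
    nlinarith
  · exact hx.elim

lemma isClosed_pieceSet (m j : ℕ) : IsClosed (pieceSet m j) := by
  unfold pieceSet
  apply IsClosed.union <;> split_ifs
  exacts [isClosed_Iic, isClosed_Icc, isClosed_Ici, isClosed_empty]

lemma exists_mem_pieceSet (hm : 0 < m) (x : ℝ) : ∃ j : Fin m, x ∈ pieceSet m j := by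
  have hm' : (0 : ℝ) < m := by exact_mod_cast hm
  rcases le_or_gt x (1 / m) with hfirst | hfirst
  · exact ⟨⟨0, hm⟩, Or.inl (by simpa using hfirst)⟩
  rcases le_or_gt (((m : ℝ) - 1) / m) x with hlast | hlast
  · exact ⟨⟨m - 1, by omega⟩, Or.inr (by simpa using hlast)⟩
  have hx : 0 ≤ (m : ℝ) * x := mul_nonneg hm'.le ((by positivity : (0 : ℝ) ≤ 1 / m).trans hfirst.le)
  have hfloor := Nat.floor_le hx
  have hfloor' := Nat.lt_floor_add_one ((m : ℝ) * x)
  rw [lt_div_iff₀ hm'] at hlast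
  refine ⟨⟨⌊(m : ℝ) * x⌋₊, ?_⟩, Icc_subset_pieceSet m _ ⟨?_, ?_⟩⟩
  · exact_mod_cast hfloor.trans_lt (by linarith : (m : ℝ) * x < m)
  · rw [div_le_iff₀ hm']
    linarith
  · rw [le_div_iff₀ hm']
    linarith

/-- The univariate spline space `S` as a submodule. -/
def splineSpace (m p : ℕ) : Submodule ℝ (ℝ → ℝ) where
  carrier := {u | IsSpline m p u}
  add_mem' := by
    rintro u v ⟨hu, hu'⟩ ⟨hv, hv'⟩
    refine ⟨hu.add hv, fun j hj => ?_⟩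
    obtain ⟨q, hq, huq⟩ := hu' j hj
    obtain ⟨r, hr, hvr⟩ := hv' j hj
    exact ⟨q + r, Polynomial.natDegree_add_le_of_degree_le hq hr,
      fun x hx => by simp [huq x hx, hvr x hx]⟩
  zero_mem' := ⟨contDiffOn_const, fun _ _ => ⟨0, by simp, by simp⟩⟩
  smul_mem' := by
    rintro c u ⟨hu, hu'⟩
    refine ⟨contDiffOn_const.smul hu, fun j hj => ?_⟩
    obtain ⟨q, hq, huq⟩ := hu' j hj
    exact ⟨c • q, (Polynomial.natDegree_smul_le _ _).trans hq, fun x hx => by simp [huq x hx]⟩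

lemma finiteDimensional_splineSpace (hm : 0 < m) (p : ℕ) :
    FiniteDimensional ℝ (splineSpace m p) := by
  choose piece hpiece using exists_mem_pieceSet hm
  let evalPieces : (Fin m → Fin (p + 1) → ℝ) →ₗ[ℝ] (ℝ → ℝ) :=
    LinearMap.pi fun x => ∑ i : Fin (p + 1),
      x ^ (i : ℕ) • (LinearMap.proj i : (Fin (p + 1) → ℝ) →ₗ[ℝ] ℝ) ∘ₗ LinearMap.proj (piece x)
  refine Submodule.finiteDimensional_of_le (S₂ := LinearMap.range evalPieces) ?_
  rintro u ⟨-, hu⟩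
  choose! q hq huq using hu
  refine ⟨fun j i => (q j).coeff i, funext fun x => ?_⟩
  rw [huq (piece x) (piece x).2 x (hpiece x), Polynomial.eval_eq_sum_range' (n := p + 1)
    (Nat.lt_succ_of_le (hq _ (piece x).2)), Finset.sum_range]
  simp [evalPieces, LinearMap.sum_apply, mul_comm]

lemma IsSpline.continuous (hm : 0 < m) (hu : IsSpline m p u) : Continuous u := by
  refine (locallyFinite_of_finite fun j : Fin m => pieceSet m j).continuous
    (eq_univ_of_forall fun x => mem_iUnion.2 (exists_mem_pieceSet hm x))
    (fun j => isClosed_pieceSet m j) fun j => ?_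
  obtain ⟨q, -, hq⟩ := hu.2 j j.2
  exact q.continuous.continuousOn.congr hq

lemma IsSpline.of_dvd {k : ℕ} (hm : 0 < m) (hkm : k ∣ m) (hu : IsSpline k p u) :
    IsSpline m p u := by
  obtain ⟨r, rfl⟩ := hkm
  rw [mul_comm] at hm ⊢
  refine ⟨hu.1, fun j hj => ?_⟩
  obtain ⟨q, hq, huq⟩ := hu.2 (j / r) (Nat.div_lt_of_lt_mul hj)
  exact ⟨q, hq, fun x hx => huq x (pieceSet_mul_subset (Nat.pos_of_mul_pos_right hm)
    (Nat.pos_of_mul_pos_left hm) j hx)⟩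

/-- Lebesgue measure on the unit interval `(0,1)`. -/
abbrev unitMeasure : Measure ℝ := volume.restrict (Ioo (0 : ℝ) 1)

/-- The points of `(0,1)` that are not knots of the uniform partition into `m` intervals. -/
def offKnots (m : ℕ) : Set ℝ := Ioo (0 : ℝ) 1 \ range fun j : ℕ => (j : ℝ) / m

lemma ae_mem_offKnots (m : ℕ) : ∀ᵐ x ∂unitMeasure, x ∈ offKnots m :=
  (ae_restrict_mem measurableSet_Ioo).and
    (ae_restrict_of_ae ((countable_range _).ae_notMem volume))

lemma exists_mem_Ioo_of_mem_offKnots (hm : 0 < m) {x : ℝ} (hx : x ∈ offKnots m) :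
    ∃ j < m, x ∈ Ioo ((j : ℝ) / m) (((j : ℝ) + 1) / m) := by
  obtain ⟨⟨hx0, hx1⟩, hknot⟩ := hx
  have hm' : (0 : ℝ) < m := by exact_mod_cast hm
  have hfloor := Nat.floor_le (mul_nonneg hm'.le hx0.le)
  have hfloor' := Nat.lt_floor_add_one ((m : ℝ) * x)
  refine ⟨⌊(m : ℝ) * x⌋₊, ?_, lt_of_le_of_ne ?_ fun h => hknot ⟨_, h⟩, ?_⟩
  · exact_mod_cast hfloor.trans_lt (by nlinarith : (m : ℝ) * x < m)
  · rw [div_le_iff₀ hm']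
    linarith
  · rw [lt_div_iff₀ hm']
    linarith

lemma IsSpline.exists_hasDerivAt (hm : 0 < m) (hu : IsSpline m p u) :
    ∃ q : ℕ → Polynomial ℝ, ∀ x ∈ offKnots m, ∃ j < m,
      HasDerivAt u ((q j).derivative.eval x) x := by
  choose! q _ huq using hu.2
  refine ⟨q, fun x hx => ?_⟩
  obtain ⟨j, hj, hxj⟩ := exists_mem_Ioo_of_mem_offKnots hm hx
  refine ⟨j, hj, ((q j).hasDerivAt x).congr_of_eventuallyEq ?_⟩
  filter_upwards [isOpen_Ioo.mem_nhds hxj] with y hy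
  exact huq j hj y (Icc_subset_pieceSet m j (Ioo_subset_Icc_self hy))

lemma IsSpline.differentiableAt (hm : 0 < m) (hu : IsSpline m p u) {x : ℝ}
    (hx : x ∈ offKnots m) : DifferentiableAt ℝ u x := by
  obtain ⟨q, hq⟩ := hu.exists_hasDerivAt hm
  obtain ⟨j, -, hj⟩ := hq x hx
  exact hj.differentiableAt

lemma IsSpline.memLp_two (hm : 0 < m) (hu : IsSpline m p u) : MemLp u 2 unitMeasure := by
  have hcont := hu.continuous hm
  obtain ⟨B, hB⟩ := isCompact_Icc.exists_bound_of_continuousOn (s := Icc (0 : ℝ) 1)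
    hcont.continuousOn
  refine MemLp.of_bound hcont.aestronglyMeasurable B ?_
  filter_upwards [ae_mem_offKnots m] with x hx using hB x (Ioo_subset_Icc_self hx.1)

lemma IsSpline.memLp_two_deriv (hm : 0 < m) (hu : IsSpline m p u) :
    MemLp (deriv u) 2 unitMeasure := by
  obtain ⟨q, hq⟩ := hu.exists_hasDerivAt hm
  choose B hB using fun j => isCompact_Icc.exists_bound_of_continuousOn (s := Icc (0 : ℝ) 1)
    (q j).derivative.continuous.continuousOn
  refine MemLp.of_bound (measurable_deriv u).aestronglyMeasurable
    (∑ j ∈ Finset.range m, |B j|) ?_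
  filter_upwards [ae_mem_offKnots m] with x hx
  obtain ⟨j, hj, hderiv⟩ := hq x hx
  rw [hderiv.deriv]
  calc ‖(q j).derivative.eval x‖
    _ ≤ |B j| := (hB j x (Ioo_subset_Icc_self hx.1)).trans (le_abs_self _)
    _ ≤ ∑ j ∈ Finset.range m, |B j| :=
      Finset.single_le_sum (f := fun j => |B j|) (fun _ _ => abs_nonneg _) (Finset.mem_range.2 hj)

lemma IsSpline.eq_zero_of_eqOn_Ioo (hm : 0 < m) (hu : IsSpline m p u)
    (hzero : EqOn u 0 (Ioo 0 1)) : u = 0 := by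
  have hm' : (0 : ℝ) < m := by exact_mod_cast hm
  ext x
  obtain ⟨j, hj⟩ := exists_mem_pieceSet hm x
  obtain ⟨q, -, hq⟩ := hu.2 j j.2
  suffices q = 0 by rw [hq x hj, this]; simp
  have hnonempty : ((j : ℕ) : ℝ) / m < ((j : ℕ) + 1 : ℝ) / m := by gcongr; linarith
  refine Polynomial.eq_zero_of_infinite_isRoot q ((Ioo_infinite hnonempty).mono fun y hy => ?_)
  have hlast : ((j : ℕ) + 1 : ℝ) / m ≤ 1 := (div_le_one hm').2 (by exact_mod_cast j.2)
  have hy01 : y ∈ Ioo (0 : ℝ) 1 := ⟨hy.1.trans_le' (by positivity), hy.2.trans_le hlast⟩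
  have hroot : q.eval y = 0 := by
    rw [← hq y (Icc_subset_pieceSet m j (Ioo_subset_Icc_self hy)), hzero hy01, Pi.zero_apply]
  exact hroot

lemma IsSpline.eq_zero_of_integral_mul_self (hm : 0 < m) (hu : IsSpline m p u)
    (h : ∫ x, u x * u x ∂unitMeasure = 0) : u = 0 := by
  have hL2 := hu.memLp_two hm
  have hcont := hu.continuous hm
  rw [integral_eq_zero_iff_of_nonneg (fun x => mul_self_nonneg _) (hL2.integrable_mul hL2)] at h
  have heqOn := Measure.eqOn_open_of_ae_eq h isOpen_Ioo (hcont.mul hcont).continuousOn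
    continuousOn_const
  exact hu.eq_zero_of_eqOn_Ioo hm fun x hx => mul_self_eq_zero.1 (heqOn hx)

lemma exists_bilinForm_integral_mul {α V : Type*} [MeasurableSpace α] {ν : Measure α}
    [AddCommGroup V] [Module ℝ V] {f : V → α → ℝ} (hf : ∀ u, MemLp (f u) 2 ν)
    (hadd : ∀ u v, f (u + v) =ᵐ[ν] f u + f v) (hsmul : ∀ (r : ℝ) u, f (r • u) =ᵐ[ν] r • f u) :
    ∃ B : BilinForm ℝ V, B.IsPosSemidef ∧ ∀ u v, B u v = ∫ x, f u x * f v x ∂ν := by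
  let toL2 : V →ₗ[ℝ] Lp ℝ 2 ν :=
    { toFun := fun u => (hf u).toLp
      map_add' := fun u v => by
        rw [← MemLp.toLp_add, MemLp.toLp_eq_toLp_iff]
        exact hadd u v
      map_smul' := fun r u => by
        rw [RingHom.id_apply, ← MemLp.toLp_const_smul, MemLp.toLp_eq_toLp_iff]
        exact hsmul r u }
  refine ⟨(innerₗ (Lp ℝ 2 ν)).compl₁₂ toL2 toL2,
    ⟨⟨fun u v => real_inner_comm (toL2 v) (toL2 u)⟩,
      ⟨fun u => real_inner_self_nonneg (x := toL2 u)⟩⟩, fun u v => ?_⟩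
  rw [LinearMap.compl₁₂_apply, innerₗ_apply_apply, L2.inner_def]
  refine integral_congr_ae ?_
  filter_upwards [(hf u).coeFn_toLp, (hf v).coeFn_toLp] with x hux hvx
  simp [toL2, hux, hvx, mul_comm]

/-- A basis `ψ` of the univariate spline space that is orthonormal in `L²(0,1)` and orthogonal
for the stiffness form, with generalized eigenvalues `μ`. -/
structure IsSplineEigenbasis (m p : ℕ) {ι : Type*} [DecidableEq ι] (ψ : ι → ℝ → ℝ)
    (μ : ι → ℝ) : Prop where
  isSpline : ∀ k, IsSpline m p (ψ k)
  mem_span : ∀ u, IsSpline m p u → u ∈ Submodule.span ℝ (range ψ)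
  mass : ∀ k l, ∫ x, ψ k x * ψ l x ∂unitMeasure = if k = l then 1 else 0
  stiffness : ∀ k l,
    ∫ x, deriv (ψ k) x * deriv (ψ l) x ∂unitMeasure = if k = l then μ k else 0

lemma IsSplineEigenbasis.nonneg {ι : Type*} [DecidableEq ι] {ψ : ι → ℝ → ℝ} {μ : ι → ℝ}
    (hψ : IsSplineEigenbasis m p ψ μ) (k : ι) : 0 ≤ μ k := by
  rw [← if_pos (rfl : k = k) (t := μ k) (e := 0), ← hψ.stiffness]
  exact integral_nonneg fun x => mul_self_nonneg _

theorem exists_isSplineEigenbasis (hm : 0 < m) (p : ℕ) :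
    ∃ (n : ℕ) (ψ : Fin n → ℝ → ℝ) (μ : Fin n → ℝ), IsSplineEigenbasis m p ψ μ := by
  have := finiteDimensional_splineSpace hm p
  obtain ⟨M, hM, hM_apply⟩ := exists_bilinForm_integral_mul
    (f := fun u : splineSpace m p => u.1) (fun u => IsSpline.memLp_two hm u.2)
    (fun _ _ => .rfl) (fun _ _ => .rfl)
  obtain ⟨K, hK, hK_apply⟩ := exists_bilinForm_integral_mul
    (f := fun u : splineSpace m p => deriv u.1) (fun u => IsSpline.memLp_two_deriv hm u.2)
    (fun u v => by
      filter_upwards [ae_mem_offKnots m] with x hx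
      exact deriv_add (IsSpline.differentiableAt hm u.2 hx) (IsSpline.differentiableAt hm v.2 hx))
    (fun r u => .of_forall fun x => deriv_const_smul_field r u.1)
  have hM' : M.Nondegenerate := by
    refine (M.nondegenerate_iff hM.nonneg (isSymm_iff.1 hM.isSymm)).2 fun u =>
      ⟨fun hu => ?_, by rintro rfl; simp⟩
    rw [hM_apply] at hu
    exact Subtype.ext (IsSpline.eq_zero_of_integral_mul_self hm u.2 hu)
  obtain ⟨n, b, μ, hMb, hKb⟩ := exists_basis_simultaneous_diagonal hM hM' hK.isSymm
  refine ⟨n, fun k => b k, μ, fun k => (b k).2, fun u hu => ?_,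
    fun k l => by rw [← hM_apply, hMb], fun k l => by rw [← hK_apply, hKb]⟩
  have hspan : Submodule.span ℝ (range fun k => (b k : ℝ → ℝ)) = splineSpace m p := by
    rw [range_comp' Subtype.val b, ← Submodule.coe_subtype, Submodule.span_image, b.span_eq]
    simp
  exact hspan.ge hu

end Splines

section TensorSplines

variable {ι : Type*} {d e m p : ℕ} {ψ : ι → ℝ → ℝ} {μ : ι → ℝ}

/-- The univariate factor in direction `j` of a tensor-product function, differentiated exactly
when `j ∈ s`. -/
def derivFactor (f : ℝ → ℝ) (s : Finset (Fin d)) (j : Fin d) : ℝ → ℝ :=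
  if j ∈ s then deriv f else f

/-- The eigenvalue `1 + ∑ i, μ (α i)` of `A_d` on the tensor product of univariate eigenfunctions
indexed by `α`. -/
def tensorEigenvalue (μ : ι → ℝ) (α : Fin d → ι) : ℝ := 1 + ∑ i, μ (α i)

lemma one_le_tensorEigenvalue (hμ : ∀ k, 0 ≤ μ k) (α : Fin d → ι) :
    1 ≤ tensorEigenvalue μ α :=
  le_add_of_nonneg_right (Finset.sum_nonneg fun i _ => hμ (α i))

lemma volume_restrict_cube (d : ℕ) :
    (volume.restrict (cube d) : Measure (Fin d → ℝ)) = Measure.pi fun _ => unitMeasure := by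
  rw [cube, volume_pi, Measure.restrict_pi_pi]

lemma ae_cube_forall_mem_offKnots (d m : ℕ) :
    ∀ᵐ x ∂volume.restrict (cube d), ∀ i, x i ∈ offKnots m := by
  rw [volume_restrict_cube, ae_all_iff]
  exact fun i => (Measure.tendsto_eval_ae_ae (i := i)).eventually (ae_mem_offKnots m)

lemma IsSpline.memLp_derivFactor {f : ℝ → ℝ} (hm : 0 < m) (hf : IsSpline m p f)
    (s : Finset (Fin d)) (j : Fin d) : MemLp (derivFactor f s j) 2 unitMeasure := by
  unfold derivFactor
  split_ifs
  · exact hf.memLp_two_deriv hm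
  · exact hf.memLp_two hm

lemma integrable_prod_derivFactor_mul (hm : 0 < m) (hψ : ∀ k, IsSpline m p (ψ k))
    (s : Finset (Fin d)) (α β : Fin d → ι) :
    Integrable (fun x : Fin d → ℝ =>
        ∏ j, (derivFactor (ψ (α j)) s j (x j) * derivFactor (ψ (β j)) s j (x j)))
      (volume.restrict (cube d)) := by
  rw [volume_restrict_cube]
  exact Integrable.fintype_prod
    (f := fun j t => derivFactor (ψ (α j)) s j t * derivFactor (ψ (β j)) s j t)
    fun j => ((hψ _).memLp_derivFactor hm s j).integrable_mul ((hψ _).memLp_derivFactor hm s j)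

lemma IsSplineEigenbasis.integral_derivFactor_mul [DecidableEq ι]
    (hψ : IsSplineEigenbasis m p ψ μ) (s : Finset (Fin d)) (j : Fin d) (k l : ι) :
    ∫ t, derivFactor (ψ k) s j t * derivFactor (ψ l) s j t ∂unitMeasure =
      if k = l then (if j ∈ s then μ k else 1) else 0 := by
  unfold derivFactor
  split_ifs with hj
  all_goals simp [hψ.mass, hψ.stiffness, *]

lemma IsSplineEigenbasis.prod_integral_derivFactor_mul [DecidableEq ι]
    (hψ : IsSplineEigenbasis m p ψ μ) (s : Finset (Fin d)) (α β : Fin d → ι) :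
    ∏ j, ∫ t, derivFactor (ψ (α j)) s j t * derivFactor (ψ (β j)) s j t ∂unitMeasure =
      if α = β then ∏ j ∈ s, μ (α j) else 0 := by
  simp only [hψ.integral_derivFactor_mul]
  split_ifs with hαβ
  · subst hαβ
    simp [Finset.prod_ite_mem]
  · obtain ⟨j, hj⟩ := Function.ne_iff.1 hαβ
    exact Finset.prod_eq_zero (Finset.mem_univ j) (by simp [hj])

variable [Fintype ι]

/-- The function `∑ α, a α * ∏ j, ψ (α j) (x j)` with coefficients `a`, differentiated factorwise
once in each of the directions in `s`. -/
def synthesis (ψ : ι → ℝ → ℝ) (s : Finset (Fin d)) :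
    ((Fin d → ι) → ℝ) →ₗ[ℝ] ((Fin d → ℝ) → ℝ) :=
  Fintype.linearCombination ℝ fun α x => ∏ j, derivFactor (ψ (α j)) s j (x j)

lemma synthesis_apply (ψ : ι → ℝ → ℝ) (s : Finset (Fin d)) (a : (Fin d → ι) → ℝ)
    (x : Fin d → ℝ) :
    synthesis ψ s a x = ∑ α, a α * ∏ j, derivFactor (ψ (α j)) s j (x j) := by
  simp [synthesis, Fintype.linearCombination_apply]

lemma synthesis_mul_synthesis (ψ : ι → ℝ → ℝ) (s : Finset (Fin d)) (a b : (Fin d → ι) → ℝ)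
    (x : Fin d → ℝ) :
    synthesis ψ s a x * synthesis ψ s b x = ∑ α, ∑ β, a α * b β *
      ∏ j, (derivFactor (ψ (α j)) s j (x j) * derivFactor (ψ (β j)) s j (x j)) := by
  simp only [synthesis_apply, Finset.sum_mul_sum, Finset.prod_mul_distrib, mul_mul_mul_comm]

lemma pd_synthesis (hm : 0 < m) (hψ : ∀ k, IsSpline m p (ψ k)) {s : Finset (Fin d)} {i : Fin d}
    (hi : i ∉ s) (a : (Fin d → ι) → ℝ) {x : Fin d → ℝ} (hx : x i ∈ offKnots m) :
    pd d i (synthesis ψ s a) x = synthesis ψ (insert i s) a x := by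
  simp only [pd, synthesis_apply]
  refine (HasDerivAt.fun_sum fun α _ => HasDerivAt.const_mul _ ?_).deriv
  let others := ∏ j ∈ Finset.univ.erase i, derivFactor (ψ (α j)) s j (x j)
  have hupdate : ∀ t, ∏ j, derivFactor (ψ (α j)) s j (Function.update x i t j) =
      ψ (α i) t * others := by
    intro t
    rw [← Finset.mul_prod_erase _ _ (Finset.mem_univ i)]
    congr 1
    · simp [derivFactor, hi]
    · refine Finset.prod_congr rfl fun j hj => ?_
      rw [Function.update_of_ne (Finset.ne_of_mem_erase hj)]
  have hinsert : ∏ j, derivFactor (ψ (α j)) (insert i s) j (x j) =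
      deriv (ψ (α i)) (x i) * others := by
    rw [← Finset.mul_prod_erase _ _ (Finset.mem_univ i)]
    congr 1
    · simp [derivFactor]
    · refine Finset.prod_congr rfl fun j hj => ?_
      simp [derivFactor, Finset.ne_of_mem_erase hj]
  simp only [hupdate, hinsert]
  exact ((hψ (α i)).differentiableAt hm hx).hasDerivAt.mul_const _

lemma pd_synthesis_empty (hm : 0 < m) (hψ : ∀ k, IsSpline m p (ψ k)) (a : (Fin d → ι) → ℝ)
    {x : Fin d → ℝ} (i : Fin d) (hx : x i ∈ offKnots m) :
    pd d i (synthesis ψ ∅ a) x = synthesis ψ {i} a x :=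
  pd_synthesis hm hψ (Finset.notMem_empty i) a hx

lemma pd_pd_synthesis_empty (hm : 0 < m) (hψ : ∀ k, IsSpline m p (ψ k)) {i j : Fin d}
    (hij : i ≠ j) (a : (Fin d → ι) → ℝ) {x : Fin d → ℝ} (hx : ∀ l, x l ∈ offKnots m) :
    pd d i (pd d j (synthesis ψ ∅ a)) x = synthesis ψ {i, j} a x := by
  rw [← pd_synthesis hm hψ (by simpa using hij) a (hx i)]
  unfold pd
  congr 1
  ext t
  refine pd_synthesis_empty hm hψ a j ?_
  rw [Function.update_of_ne hij.symm]
  exact hx j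

lemma integrable_synthesis_mul (hm : 0 < m) (hψ : ∀ k, IsSpline m p (ψ k)) (s : Finset (Fin d))
    (a b : (Fin d → ι) → ℝ) :
    Integrable (fun x => synthesis ψ s a x * synthesis ψ s b x) (volume.restrict (cube d)) := by
  simp only [synthesis_mul_synthesis]
  exact integrable_finsetSum _ fun α _ => integrable_finsetSum _ fun β _ =>
    (integrable_prod_derivFactor_mul hm hψ s α β).const_mul _

variable [DecidableEq ι]

namespace IsSplineEigenbasis

lemma integral_synthesis_mul (hψ : IsSplineEigenbasis m p ψ μ) (hm : 0 < m)
    (s : Finset (Fin d)) (a b : (Fin d → ι) → ℝ) :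
    ∫ x in cube d, synthesis ψ s a x * synthesis ψ s b x =
      weightedForm (fun α => ∏ j ∈ s, μ (α j)) a b := by
  have hint (α β : Fin d → ι) :=
    (integrable_prod_derivFactor_mul hm hψ.isSpline s α β).const_mul (a α * b β)
  simp only [synthesis_mul_synthesis, weightedForm_apply]
  rw [integral_finsetSum _ fun α _ => integrable_finsetSum _ fun β _ => hint α β]
  refine Finset.sum_congr rfl fun α _ => ?_
  rw [integral_finsetSum _ fun β _ => hint α β]
  have horth (β : Fin d → ι) : ∫ x in cube d, a α * b β *
      ∏ j, (derivFactor (ψ (α j)) s j (x j) * derivFactor (ψ (β j)) s j (x j)) =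
      if α = β then (∏ j ∈ s, μ (α j)) * (a α * b β) else 0 := by
    rw [integral_const_mul, volume_restrict_cube, integral_fintype_prod_eq_prod
      (fun j t => derivFactor (ψ (α j)) s j t * derivFactor (ψ (β j)) s j t),
      hψ.prod_integral_derivFactor_mul, mul_ite, mul_zero, mul_comm]
  simp [horth]

lemma integral_sum_synthesis_mul {σ : Type*} [Fintype σ] (hψ : IsSplineEigenbasis m p ψ μ)
    (hm : 0 < m) (s : σ → Finset (Fin d)) (a b : (Fin d → ι) → ℝ) :
    ∫ x in cube d, ∑ i, synthesis ψ (s i) a x * synthesis ψ (s i) b x =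
      weightedForm (fun α => ∑ i, ∏ j ∈ s i, μ (α j)) a b := by
  rw [integral_finsetSum _ fun i _ => integrable_synthesis_mul hm hψ.isSpline (s i) a b]
  simp only [hψ.integral_synthesis_mul hm, weightedForm_apply, Finset.sum_mul]
  exact Finset.sum_comm

lemma ipd_synthesis (hψ : IsSplineEigenbasis m p ψ μ) (hm : 0 < m) (a b : (Fin d → ι) → ℝ) :
    ipd d (synthesis ψ ∅ a) (synthesis ψ ∅ b) = weightedForm 1 a b := by
  simp only [ipd, hψ.integral_synthesis_mul hm, Finset.prod_empty]
  rfl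

lemma aForm_synthesis (hψ : IsSplineEigenbasis m p ψ μ) (hm : 0 < m)
    (a b : (Fin d → ι) → ℝ) :
    aForm d (synthesis ψ ∅ a) (synthesis ψ ∅ b) = weightedForm (tensorEigenvalue μ) a b := by
  let s : Option (Fin d) → Finset (Fin d) := fun i => i.elim ∅ singleton
  have hweight : tensorEigenvalue μ = fun α : Fin d → ι => ∑ i, ∏ j ∈ s i, μ (α j) := by
    ext α
    simp [s, tensorEigenvalue, Fintype.sum_option]
  rw [hweight, ← hψ.integral_sum_synthesis_mul hm]
  refine integral_congr_ae ?_
  filter_upwards [ae_cube_forall_mem_offKnots d m] with x hx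
  have hpd (c : (Fin d → ι) → ℝ) (i : Fin d) := pd_synthesis_empty hm hψ.isSpline c i (hx i)
  simp only [hpd, Fintype.sum_option, s, Option.elim]
  exact add_comm _ _

lemma mixedForm_synthesis (hψ : IsSplineEigenbasis m p ψ μ) (hm : 0 < m)
    (a b : (Fin (e + 2) → ι) → ℝ) :
    mixedForm e (synthesis ψ ∅ a) (synthesis ψ ∅ b) = weightedForm
      (fun α => tensorEigenvalue μ (Fin.init α) * (1 + μ (α (Fin.last (e + 1))))) a b := by
  let l := Fin.last (e + 1)
  let s : Option (Fin (e + 1)) × Bool → Finset (Fin (e + 2))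
    | (i, true) => i.elim {l} fun j => {j.castSucc, l}
    | (i, false) => i.elim ∅ fun j => {j.castSucc}
  have hl (j : Fin (e + 1)) : j.castSucc ≠ l := (Fin.castSucc_lt_last j).ne
  have hweight : (fun α : Fin (e + 2) → ι => tensorEigenvalue μ (Fin.init α) * (1 + μ (α l))) =
      fun α => ∑ i, ∏ j ∈ s i, μ (α j) := by
    ext α
    simp only [s, tensorEigenvalue, Fin.init, Fintype.sum_prod_type, Fintype.sum_option,
      Fintype.sum_bool, Option.elim, Finset.prod_empty, Finset.prod_singleton, Finset.prod_pair,
      ne_eq, hl, not_false_eq_true, Finset.sum_add_distrib, ← Finset.sum_mul]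
    ring
  rw [hweight, ← hψ.integral_sum_synthesis_mul hm]
  refine integral_congr_ae ?_
  filter_upwards [ae_cube_forall_mem_offKnots (e + 2) m] with x hx
  have hpd (c : (Fin (e + 2) → ι) → ℝ) (i : Fin (e + 2)) :=
    pd_synthesis_empty hm hψ.isSpline c i (hx i)
  have hpd_pd (c : (Fin (e + 2) → ι) → ℝ) (j : Fin (e + 1)) :=
    pd_pd_synthesis_empty hm hψ.isSpline (hl j) c hx
  rw [Fin.sum_univ_castSucc]
  simp only [hpd, hl, hpd_pd, if_false, if_true, Fintype.sum_prod_type, Fintype.sum_option,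
    Fintype.sum_bool, s, Option.elim, l]
  ring

end IsSplineEigenbasis

lemma IsSplineEigenbasis.range_synthesis (hψ : IsSplineEigenbasis m p ψ μ) (d : ℕ) :
    LinearMap.range (synthesis ψ (∅ : Finset (Fin d))) = TensorSpline d m p := by
  refine le_antisymm ?_ (Submodule.span_le.2 ?_)
  · rw [synthesis, Fintype.range_linearCombination, Submodule.span_le]
    rintro _ ⟨α, rfl⟩
    exact Submodule.subset_span ⟨fun j => ψ (α j), fun j => hψ.isSpline _, by simp [derivFactor]⟩
  · rintro _ ⟨f, hf, rfl⟩
    choose a ha using fun i => Submodule.mem_span_range_iff_exists_fun ℝ |>.1 (hψ.mem_span _ (hf i))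
    refine ⟨fun α => ∏ i, a i (α i), funext fun x => ?_⟩
    simp only [← ha, Finset.sum_apply, Pi.smul_apply, smul_eq_mul, Finset.prod_univ_sum,
      Fintype.piFinset_univ, Finset.prod_mul_distrib, synthesis_apply, derivFactor,
      Finset.notMem_empty, if_false]

end TensorSplines

section SplitVariables

variable {ι : Type*} {d₁ d₂ d e m p : ℕ} {ψ : ι → ℝ → ℝ} {μ : ι → ℝ}

lemma tensorSpline_mono_of_dvd {k : ℕ} (d p : ℕ) (hm : 0 < m) (hkm : k ∣ m) :
    TensorSpline d k p ≤ TensorSpline d m p := by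
  refine Submodule.span_mono ?_
  rintro _ ⟨f, hf, rfl⟩
  exact ⟨f, fun i => (hf i).of_dvd hm hkm, rfl⟩

lemma l2normSqD_eq_ipd (d : ℕ) (u : (Fin d → ℝ) → ℝ) : l2normSqD d u = ipd d u u := by
  simp only [l2normSqD, ipd, sq]

/-- The approximation property `‖(I - T_d) u‖_{M_d} ≤ c ‖u‖_{A_d}` of the Galerkin projector `T_d`
onto the coarse space `(S_c)^d`. -/
def CoarseApproximation (d m p : ℕ) (c : ℝ) : Prop :=
  ∀ u ∈ TensorSpline d m p, ∀ v, IsGalerkinCoarseProj d m p u v →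
    √(l2normSqD d (u - v)) ≤ c * √(aForm d u u)

/-- Reads a function of a pair of variable blocks as a function of the concatenated variables. It
is used both for functions of real variables and for coefficient vectors. -/
def joinVars (α : Type*) (d₁ d₂ : ℕ) :
    ((Fin d₁ → α) × (Fin d₂ → α) → ℝ) ≃ₗ[ℝ] ((Fin (d₁ + d₂) → α) → ℝ) :=
  LinearEquiv.funCongrLeft ℝ ℝ (Fin.appendEquiv d₁ d₂).symm

lemma joinVars_apply {α : Type*} (F : (Fin d₁ → α) × (Fin d₂ → α) → ℝ) (x : Fin (d₁ + d₂) → α) :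
    joinVars α d₁ d₂ F x = F (fun i => x (Fin.castAdd d₂ i), fun i => x (Fin.natAdd d₁ i)) :=
  rfl

lemma joinVars_append {α : Type*} (F : (Fin d₁ → α) × (Fin d₂ → α) → ℝ)
    (x : (Fin d₁ → α) × (Fin d₂ → α)) :
    joinVars α d₁ d₂ F (Fin.append x.1 x.2) = F x := by
  simp [joinVars_apply]

lemma tensorSpline_add (d₁ d₂ m p : ℕ) :
    TensorSpline (d₁ + d₂) m p =
      (Submodule.map₂ outer (TensorSpline d₁ m p) (TensorSpline d₂ m p)).map
        (joinVars ℝ d₁ d₂).toLinearMap := by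
  rw [TensorSpline, TensorSpline, TensorSpline, Submodule.map₂_span_span, Submodule.map_span]
  congr 1
  ext u
  constructor
  · rintro ⟨f, hf, rfl⟩
    refine ⟨_, ⟨_, ⟨fun i => f (Fin.castAdd d₂ i), fun i => hf _, rfl⟩,
      _, ⟨fun i => f (Fin.natAdd d₁ i), fun i => hf _, rfl⟩, rfl⟩, funext fun x => ?_⟩
    simp [joinVars_apply, outer_apply, Fin.prod_univ_add]
  · rintro ⟨_, ⟨_, ⟨f, hf, rfl⟩, _, ⟨g, hg, rfl⟩, rfl⟩, rfl⟩
    refine ⟨Fin.append f g, Fin.addCases (by simpa using hf) (by simpa using hg),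
      funext fun x => ?_⟩
    simp [joinVars_apply, outer_apply, Fin.prod_univ_add]

variable [Fintype ι]

lemma weightedForm_joinVars (w : (Fin (d₁ + d₂) → ι) → ℝ)
    (U V : (Fin d₁ → ι) × (Fin d₂ → ι) → ℝ) :
    weightedForm w (joinVars ι d₁ d₂ U) (joinVars ι d₁ d₂ V) =
      weightedForm (fun x => w (Fin.append x.1 x.2)) U V := by
  simp only [weightedForm_apply, ← (Fin.appendEquiv d₁ d₂).sum_comp]
  exact Finset.sum_congr rfl fun x _ => by simp [Fin.appendEquiv, joinVars_append]

/-- The tensor-product function whose coefficients are indexed by pairs of multi-indices. -/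
def pairSynthesis (ψ : ι → ℝ → ℝ) (d₁ d₂ : ℕ) :
    ((Fin d₁ → ι) × (Fin d₂ → ι) → ℝ) →ₗ[ℝ] ((Fin (d₁ + d₂) → ℝ) → ℝ) :=
  synthesis ψ ∅ ∘ₗ (joinVars ι d₁ d₂).toLinearMap

lemma pairSynthesis_outer (f : (Fin d₁ → ι) → ℝ) (g : (Fin d₂ → ι) → ℝ) :
    pairSynthesis ψ d₁ d₂ (outer f g) =
      joinVars ℝ d₁ d₂ (outer (synthesis ψ ∅ f) (synthesis ψ ∅ g)) := by
  ext x
  simp only [pairSynthesis, LinearMap.comp_apply, LinearEquiv.coe_coe, joinVars_apply,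
    outer_apply, synthesis_apply, Finset.sum_mul_sum, ← Fintype.sum_prod_type',
    ← (Fin.appendEquiv d₁ d₂).sum_comp, Fin.prod_univ_add]
  refine Finset.sum_congr rfl fun α _ => ?_
  simp [Fin.appendEquiv, derivFactor, mul_mul_mul_comm]

/-- The coefficient vectors of the coarse tensor-product splines. -/
def coarseCoeffs (ψ : ι → ℝ → ℝ) (d m p : ℕ) : Submodule ℝ ((Fin d → ι) → ℝ) :=
  (TensorSplineCoarse d m p).comap (synthesis ψ ∅)

variable [DecidableEq ι]

namespace IsSplineEigenbasis

lemma range_pairSynthesis (hψ : IsSplineEigenbasis m p ψ μ) (d₁ d₂ : ℕ) :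
    LinearMap.range (pairSynthesis ψ d₁ d₂) = TensorSpline (d₁ + d₂) m p := by
  rw [pairSynthesis, LinearMap.range_comp_of_range_eq_top _ (LinearEquiv.range _),
    hψ.range_synthesis]

lemma map_coarseCoeffs (hψ : IsSplineEigenbasis m p ψ μ) (hm : 0 < m) (heven : 2 ∣ m) (d : ℕ) :
    (coarseCoeffs ψ d m p).map (synthesis ψ ∅) = TensorSplineCoarse d m p := by
  refine Submodule.map_comap_eq_of_le ?_
  rw [hψ.range_synthesis]
  exact tensorSpline_mono_of_dvd d p hm (Nat.div_dvd_of_dvd heven)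

lemma map_pairSynthesis_coarseCoeffs (hψ : IsSplineEigenbasis m p ψ μ) (hm : 0 < m)
    (heven : 2 ∣ m) (d₁ d₂ : ℕ) :
    (Submodule.map₂ outer (coarseCoeffs ψ d₁ m p) (coarseCoeffs ψ d₂ m p)).map
      (pairSynthesis ψ d₁ d₂) = TensorSplineCoarse (d₁ + d₂) m p := by
  rw [TensorSplineCoarse, tensorSpline_add, ← TensorSplineCoarse, ← TensorSplineCoarse,
    ← hψ.map_coarseCoeffs hm heven d₁, ← hψ.map_coarseCoeffs hm heven d₂]
  simp only [Submodule.map₂_eq_span_image2, Submodule.map_span, Submodule.map_coe, image_image2,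
    image2_image_left, image2_image_right, pairSynthesis_outer, LinearEquiv.coe_coe]

lemma ipd_pairSynthesis (hψ : IsSplineEigenbasis m p ψ μ) (hm : 0 < m)
    (U V : (Fin d₁ → ι) × (Fin d₂ → ι) → ℝ) :
    ipd (d₁ + d₂) (pairSynthesis ψ d₁ d₂ U) (pairSynthesis ψ d₁ d₂ V) = weightedForm 1 U V :=
  (hψ.ipd_synthesis hm _ _).trans (weightedForm_joinVars _ U V)

lemma aForm_pairSynthesis (hψ : IsSplineEigenbasis m p ψ μ) (hm : 0 < m)
    (U V : (Fin d₁ → ι) × (Fin d₂ → ι) → ℝ) :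
    aForm (d₁ + d₂) (pairSynthesis ψ d₁ d₂ U) (pairSynthesis ψ d₁ d₂ V) =
      weightedForm (sumWeight (tensorEigenvalue μ) (tensorEigenvalue μ)) U V := by
  refine (hψ.aForm_synthesis hm _ _).trans ((weightedForm_joinVars _ U V).trans ?_)
  refine congrArg (fun w => weightedForm w U V) (funext fun x => ?_)
  simp only [sumWeight, tensorEigenvalue, Fin.sum_univ_add, Fin.append_left, Fin.append_right]
  ring

lemma mixedForm_pairSynthesis (hψ : IsSplineEigenbasis m p ψ μ) (hm : 0 < m)
    (U V : (Fin (e + 1) → ι) × (Fin 1 → ι) → ℝ) :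
    mixedForm e (pairSynthesis ψ (e + 1) 1 U) (pairSynthesis ψ (e + 1) 1 V) =
      weightedForm (outer (tensorEigenvalue μ) (tensorEigenvalue μ)) U V := by
  refine (hψ.mixedForm_synthesis hm _ _).trans ((weightedForm_joinVars _ U V).trans ?_)
  refine congrArg (fun w => weightedForm w U V) (funext fun x => ?_)
  have hinit : Fin.init (Fin.append x.1 x.2) = x.1 := funext fun j => Fin.append_left x.1 x.2 j
  have hlast : Fin.append x.1 x.2 (Fin.last (e + 1)) = x.2 0 := Fin.append_right x.1 x.2 0
  simp [hinit, hlast, outer_apply, tensorEigenvalue]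

lemma galerkinBound_coarseCoeffs (hψ : IsSplineEigenbasis m p ψ μ) (hm : 0 < m)
    (heven : 2 ∣ m) {c : ℝ} (h : CoarseApproximation d m p c) :
    GalerkinBound (weightedForm 1) (weightedForm (tensorEigenvalue μ)) (coarseCoeffs ψ d m p)
      (c ^ 2) := by
  rintro a b ⟨hb, horth⟩
  have hproj : IsGalerkinCoarseProj d m p (synthesis ψ ∅ a) (synthesis ψ ∅ b) := by
    refine ⟨hb, fun w hw => ?_⟩
    rw [← hψ.map_coarseCoeffs hm heven] at hw
    obtain ⟨z, hz, rfl⟩ := hw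
    rw [← map_sub, hψ.aForm_synthesis hm, horth z hz]
  have hbound := h _ (hψ.range_synthesis d ▸ ⟨a, rfl⟩) _ hproj
  have hpos : 0 ≤ weightedForm (tensorEigenvalue μ) a a :=
    (weightedForm_isPosSemidef fun α =>
      zero_le_one.trans (one_le_tensorEigenvalue hψ.nonneg α)).nonneg a
  rw [l2normSqD_eq_ipd, ← map_sub, hψ.ipd_synthesis hm, hψ.aForm_synthesis hm,
    Real.sqrt_le_iff, mul_pow, Real.sq_sqrt hpos] at hbound
  exact hbound.2

end IsSplineEigenbasis

end SplitVariables

section InductiveStep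

lemma exists_isOrthProj_of_forall_mem_map {V E : Type*} [AddCommGroup V] [Module ℝ V]
    [AddCommGroup E] [Module ℝ E] {A : BilinForm ℝ V} {C : Submodule ℝ V} {Φ : V →ₗ[ℝ] E}
    {a : E → E → ℝ} (ha : ∀ x y, a (Φ x) (Φ y) = A x y) {x : V} {v : E} (hv : v ∈ C.map Φ)
    (horth : ∀ z ∈ C.map Φ, a (Φ x - v) z = 0) : ∃ y, Φ y = v ∧ IsOrthProj A C x y := by
  obtain ⟨y, hy, rfl⟩ := hv
  refine ⟨y, rfl, hy, fun z hz => ?_⟩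
  rw [← ha, map_sub]
  exact horth _ ⟨z, hz, rfl⟩

lemma sqrt_le_two_mul_sqrt {c x y : ℝ} (hc : 0 ≤ c) (hxy : x ≤ 4 * c ^ 2 * y) :
    √x ≤ 2 * c * √y := by
  calc √x ≤ √((2 * c) ^ 2 * y) := Real.sqrt_le_sqrt (hxy.trans_eq (by ring))
    _ = 2 * c * √y := by rw [Real.sqrt_mul (sq_nonneg _), Real.sqrt_sq (by positivity)]

variable {d₁ d₂ e m p : ℕ} {c : ℝ}

theorem sqrt_aForm_sub_le_of_isGalerkinCoarseProj (hm : 0 < m) (heven : 2 ∣ m) (hc : 0 ≤ c)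
    (h₁ : CoarseApproximation d₁ m p c) (h₂ : CoarseApproximation d₂ m p c)
    {u v w : (Fin (d₁ + d₂) → ℝ) → ℝ} (hu : u ∈ TensorSpline (d₁ + d₂) m p)
    (hw : w ∈ TensorSpline (d₁ + d₂) m p)
    (hriesz : ∀ z ∈ TensorSpline (d₁ + d₂) m p, ipd (d₁ + d₂) w z = aForm (d₁ + d₂) u z)
    (hv : IsGalerkinCoarseProj (d₁ + d₂) m p u v) :
    √(aForm (d₁ + d₂) (u - v) (u - v)) ≤ 2 * c * √(aForm (d₁ + d₂) u w) := by
  obtain ⟨n, ψ, μ, hψ⟩ := exists_isSplineEigenbasis hm p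
  have hrange := hψ.range_pairSynthesis d₁ d₂
  have hcoarse := hψ.map_pairSynthesis_coarseCoeffs hm heven d₁ d₂
  obtain ⟨U, rfl⟩ := hrange.ge hu
  obtain ⟨W, rfl⟩ := hrange.ge hw
  obtain ⟨V, rfl, hV⟩ := exists_isOrthProj_of_forall_mem_map (hψ.aForm_pairSynthesis hm)
    (hcoarse.ge hv.1) fun z hz => hv.2 z (hcoarse.le hz)
  have hW (Z) := hriesz (pairSynthesis ψ d₁ d₂ Z) (hrange.le ⟨Z, rfl⟩)
  simp only [hψ.ipd_pairSynthesis hm, hψ.aForm_pairSynthesis hm] at hW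
  rw [← hriesz _ hw, ← map_sub, hψ.ipd_pairSynthesis hm, hψ.aForm_pairSynthesis hm]
  exact sqrt_le_two_mul_sqrt hc (weightedForm_sub_isOrthProj_sumWeight_le
    (one_le_tensorEigenvalue hψ.nonneg) (one_le_tensorEigenvalue hψ.nonneg) (sq_nonneg c)
    (hψ.galerkinBound_coarseCoeffs hm heven h₁) (hψ.galerkinBound_coarseCoeffs hm heven h₂) hV hW)

theorem sqrt_aForm_sub_le_of_mixedForm_orthogonal (hm : 0 < m) (heven : 2 ∣ m) (hc : 0 ≤ c)
    (h₁ : CoarseApproximation (e + 1) m p c) (h₂ : CoarseApproximation 1 m p c)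
    {u v w : (Fin (e + 1 + 1) → ℝ) → ℝ} (hu : u ∈ TensorSpline (e + 1 + 1) m p)
    (hw : w ∈ TensorSpline (e + 1 + 1) m p)
    (hriesz : ∀ z ∈ TensorSpline (e + 1 + 1) m p, ipd (e + 1 + 1) w z = aForm (e + 1 + 1) u z)
    (hv : v ∈ TensorSplineCoarse (e + 1 + 1) m p)
    (horth : ∀ z ∈ TensorSplineCoarse (e + 1 + 1) m p, mixedForm e (u - v) z = 0) :
    √(aForm (e + 1 + 1) (u - v) (u - v)) ≤ 2 * c * √(aForm (e + 1 + 1) u w) := by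
  obtain ⟨n, ψ, μ, hψ⟩ := exists_isSplineEigenbasis hm p
  have hrange := hψ.range_pairSynthesis (e + 1) 1
  have hcoarse := hψ.map_pairSynthesis_coarseCoeffs hm heven (e + 1) 1
  obtain ⟨U, rfl⟩ := hrange.ge hu
  obtain ⟨W, rfl⟩ := hrange.ge hw
  obtain ⟨V, rfl, hV⟩ := exists_isOrthProj_of_forall_mem_map (hψ.mixedForm_pairSynthesis hm)
    (hcoarse.ge hv) fun z hz => horth z (hcoarse.le hz)
  have hW (Z) := hriesz (pairSynthesis ψ (e + 1) 1 Z) (hrange.le ⟨Z, rfl⟩)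
  simp only [hψ.ipd_pairSynthesis hm, hψ.aForm_pairSynthesis hm] at hW
  rw [← hriesz _ hw, ← map_sub, hψ.ipd_pairSynthesis hm, hψ.aForm_pairSynthesis hm]
  exact sqrt_le_two_mul_sqrt hc (weightedForm_sub_isOrthProj_outer_le
    (one_le_tensorEigenvalue hψ.nonneg) (one_le_tensorEigenvalue hψ.nonneg) (sq_nonneg c)
    (hψ.galerkinBound_coarseCoeffs hm heven h₁) (hψ.galerkinBound_coarseCoeffs hm heven h₂) hV hW)

theorem CoarseApproximation.add (hm : 0 < m) (heven : 2 ∣ m) (hc : 0 ≤ c)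
    (h₁ : CoarseApproximation d₁ m p c) (h₂ : CoarseApproximation d₂ m p c) :
    CoarseApproximation (d₁ + d₂) m p (2 * c) := by
  intro u hu v hv
  obtain ⟨n, ψ, μ, hψ⟩ := exists_isSplineEigenbasis hm p
  have hcoarse := hψ.map_pairSynthesis_coarseCoeffs hm heven d₁ d₂
  obtain ⟨U, rfl⟩ := (hψ.range_pairSynthesis d₁ d₂).ge hu
  obtain ⟨V, rfl, hV⟩ := exists_isOrthProj_of_forall_mem_map (hψ.aForm_pairSynthesis hm)
    (hcoarse.ge hv.1) fun z hz => hv.2 z (hcoarse.le hz)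
  rw [← map_sub, l2normSqD_eq_ipd, hψ.ipd_pairSynthesis hm, hψ.aForm_pairSynthesis hm]
  exact sqrt_le_two_mul_sqrt hc (galerkinBound_sumWeight
    (one_le_tensorEigenvalue hψ.nonneg) (one_le_tensorEigenvalue hψ.nonneg) (sq_nonneg c)
    (hψ.galerkinBound_coarseCoeffs hm heven h₁) (hψ.galerkinBound_coarseCoeffs hm heven h₂) U V hV)

end InductiveStep

/-- (inductive step in the proof of Lemma `lemma:approx:dd`), for
`d = e + 2 ≥ 2`.  The norm `‖u‖_{A_d M_d⁻¹ A_d}` is encoded as `√(a(u,w))` where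
`w = M_d⁻¹A_d u ∈ S^d` is characterized by `(w, z)_{L²} = a(u, z) ∀z ∈ S^d`.
If `‖(I−T_1)u‖_{M_1} ≤ c·h·‖u‖_{A_1}` on `S` and
`‖(I−T_{d−1})u‖_{M_{d−1}} ≤ c·h·‖u‖_{A_{d−1}}` on `S^{d−1}`, then there is `c′`
depending only on `c` and `d` with
`‖(I − T_{d−1}⊗T_1)u‖_{A_d} ≤ c′·h·‖u‖_{A_d M_d⁻¹ A_d}`; consequently the
`A_d`-orthogonal projector `T_d` onto `(S_c)^d` satisfies
`‖(I−T_d)u‖_{A_d} ≤ c′·h·‖u‖_{A_d M_d⁻¹ A_d}` and hence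
`‖(I−T_d)u‖_{M_d} ≤ c′·h·‖u‖_{A_d}` for all `u ∈ S^d`. -/
theorem coarse_approximation_inductive_step :
    ∀ c : ℝ, 0 < c → ∀ e : ℕ, ∃ c' : ℝ, 0 < c' ∧
      ∀ m p : ℕ, m % 2 = 0 → 2 ≤ m → 1 ≤ p →
      (∀ u : (Fin 1 → ℝ) → ℝ, u ∈ TensorSpline 1 m p →
        ∀ v : (Fin 1 → ℝ) → ℝ, IsGalerkinCoarseProj 1 m p u v →
          Real.sqrt (l2normSqD 1 (u - v)) ≤
            c * (1 / (m : ℝ)) * Real.sqrt (aForm 1 u u)) →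
      (∀ u : (Fin (e + 1) → ℝ) → ℝ, u ∈ TensorSpline (e + 1) m p →
        ∀ v : (Fin (e + 1) → ℝ) → ℝ, IsGalerkinCoarseProj (e + 1) m p u v →
          Real.sqrt (l2normSqD (e + 1) (u - v)) ≤
            c * (1 / (m : ℝ)) * Real.sqrt (aForm (e + 1) u u)) →
      ∀ u : (Fin (e + 2) → ℝ) → ℝ, u ∈ TensorSpline (e + 2) m p →
      ∀ w : (Fin (e + 2) → ℝ) → ℝ,
        w ∈ TensorSpline (e + 2) m p →
        (∀ z ∈ TensorSpline (e + 2) m p, ipd (e + 2) w z = aForm (e + 2) u z) →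
        (∀ v : (Fin (e + 2) → ℝ) → ℝ,
          v ∈ TensorSplineCoarse (e + 2) m p →
          (∀ z ∈ TensorSplineCoarse (e + 2) m p, mixedForm e (u - v) z = 0) →
          Real.sqrt (aForm (e + 2) (u - v) (u - v)) ≤
            c' * (1 / (m : ℝ)) * Real.sqrt (aForm (e + 2) u w)) ∧
        (∀ v : (Fin (e + 2) → ℝ) → ℝ, IsGalerkinCoarseProj (e + 2) m p u v →
          Real.sqrt (aForm (e + 2) (u - v) (u - v)) ≤
            c' * (1 / (m : ℝ)) * Real.sqrt (aForm (e + 2) u w) ∧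
          Real.sqrt (l2normSqD (e + 2) (u - v)) ≤
            c' * (1 / (m : ℝ)) * Real.sqrt (aForm (e + 2) u u)) := by
  intro c hc e
  refine ⟨2 * c, by positivity, fun m p heven hm₂ _ h₂ h₁ u hu w hw hriesz => ?_⟩
  have hm : 0 < m := by omega
  have heven : 2 ∣ m := Nat.dvd_of_mod_eq_zero heven
  have hch : 0 ≤ c * (1 / (m : ℝ)) := by positivity
  rw [mul_assoc 2 c]
  exact ⟨fun v hv horth =>
      sqrt_aForm_sub_le_of_mixedForm_orthogonal hm heven hch h₁ h₂ hu hw hriesz hv horth,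
    fun v hv =>
      ⟨sqrt_aForm_sub_le_of_isGalerkinCoarseProj hm heven hch h₁ h₂ hu hw hriesz hv,
        CoarseApproximation.add hm heven hch h₁ h₂ u hu v hv⟩⟩

end SplineMG
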